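/- Let z ∈ ℂ^{n+1} be a positive vector (⟨z,z⟩ > 0) such that z and z̄ are linearly independent over ℂ and f(z) = 0 (i.e. the plane span_ℂ{z,z̄} is parabolic). Let η ∈ ℂ satisfy η² = −⟨z,z̄⟩ and set w = conj(η)·z + η·z̄. Then |η|² = ⟨z,z⟩ and ⟨z,w⟩ = 0 and ⟨z̄,w⟩ = 0; i.e. w lies in the intersection of the orthogonal hyperplanes of z and of z̄. -/

import Mathlib

/-!
Since `|⟨z, z̄⟩| = ⟨z, z⟩`, we have `⟨z, z⟩ = |η|²` and `⟨z, z̄⟩ = -η²`, so the Gram matrix of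
`z` and `z̄` is singular, and the coefficients of `w` are chosen to lie in its kernel. Only the Gram
matrix enters, so `z` and `z̄` may be any two vectors of equal length for any Hermitian form.
-/

open scoped ComplexConjugate

noncomputable def herm (n : ℕ) (z w : Fin (n + 1) → ℂ) : ℂ :=
  (∑ j : Fin n, z j.castSucc * conj (w j.castSucc)) - z (Fin.last n) * conj (w (Fin.last n))

def conjVec (n : ℕ) (z : Fin (n + 1) → ℂ) : Fin (n + 1) → ℂ := fun j => conj (z j)

noncomputable def fdet (n : ℕ) (z : Fin (n + 1) → ℂ) : ℝ :=
  Complex.normSq (herm n z (conjVec n z)) - ((herm n z z).re) ^ 2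

def IsRealVec (n : ℕ) (z : Fin (n + 1) → ℂ) : Prop := conjVec n z = z

def Scone (n : ℕ) : Set (Fin (n + 1) → ℂ) :=
  {w | w ≠ 0 ∧ IsRealVec n w ∧ herm n w w = 0}

def LambdaCone (n : ℕ) : Set (Fin (n + 1) → ℂ) :=
  {z | z ≠ 0 ∧ ∃ w ∈ Scone n, herm n z w = 0}

section SesquilinearForm

variable {𝕜 V : Type*} [RCLike 𝕜] [AddCommGroup V] [Module 𝕜 V] {B : V →ₗ⋆[𝕜] V →ₗ[𝕜] 𝕜}
  {u v : V} {η : 𝕜}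

theorem apply_conj_smul_add_smul_eq_zero (hu : B u u = (‖η‖ ^ 2 : ℝ))
    (hvu : B v u = -η ^ 2) : B (conj η • u + η • v) u = 0 := by
  calc B (conj η • u + η • v) u
      = η * B u u + conj η * B v u := by simp
    _ = η * (conj η * η) + conj η * -η ^ 2 := by rw [hu, hvu, RCLike.conj_mul, RCLike.ofReal_pow]
    _ = 0 := by ring

theorem midpoint_in_orth_general (hB : B.IsSymm) (huv : B v v = B u u)
    (hnorm : ‖B v u‖ = RCLike.re (B u u)) (hη : η ^ 2 = -B v u) :
    ‖η‖ ^ 2 = RCLike.re (B u u) ∧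
    B (conj η • u + η • v) u = 0 ∧
    B (conj η • u + η • v) v = 0 := by
  have norm_sq_η : ‖η‖ ^ 2 = RCLike.re (B u u) := by rw [← norm_pow, hη, norm_neg, hnorm]
  have apply_u_u : B u u = (‖η‖ ^ 2 : ℝ) := by
    rw [norm_sq_η, RCLike.conj_eq_iff_re.mp (hB.eq u u)]
  have apply_v_u : B v u = -η ^ 2 := by rw [hη, neg_neg]
  have apply_u_v : B u v = -conj η ^ 2 := by rw [← hB.eq v u, apply_v_u, map_neg, map_pow]
  refine ⟨norm_sq_η, apply_conj_smul_add_smul_eq_zero apply_u_u apply_v_u, ?_⟩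
  -- Exchanging `u` with `v` and `η` with `conj η` preserves both the hypotheses and `w`.
  have orth_v : B (conj (conj η) • v + conj η • u) v = 0 :=
    apply_conj_smul_add_smul_eq_zero (by rw [huv, apply_u_u, RCLike.norm_conj]) apply_u_v
  rwa [RCLike.conj_conj, add_comm] at orth_v

end SesquilinearForm

/-- The form `herm n` as a Mathlib sesquilinear form. Its arguments are swapped, because Mathlib
takes sesquilinear forms to be conjugate-linear in the first variable. -/
noncomputable def hermForm (n : ℕ) :
    (Fin (n + 1) → ℂ) →ₗ⋆[ℂ] (Fin (n + 1) → ℂ) →ₗ[ℂ] ℂ :=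
  LinearMap.mk₂'ₛₗ (starRingEnd ℂ) (RingHom.id ℂ) (fun w z => herm n z w)
    (fun w₁ w₂ z => by
      simp only [herm, Pi.add_apply, map_add, mul_add, Finset.sum_add_distrib]
      ring)
    (fun c w z => by
      simp only [herm, Pi.smul_apply, smul_eq_mul, map_mul, mul_sub, Finset.mul_sum, mul_left_comm])
    (fun w z₁ z₂ => by
      simp only [herm, Pi.add_apply, add_mul, Finset.sum_add_distrib]
      ring)
    (fun c w z => by
      simp only [herm, Pi.smul_apply, smul_eq_mul, RingHom.id_apply, mul_sub, Finset.mul_sum,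
        mul_assoc])

theorem isSymm_hermForm (n : ℕ) : (hermForm n).IsSymm :=
  ⟨fun w z => by simp [hermForm, herm, mul_comm]⟩

theorem herm_conjVec_conjVec (n : ℕ) (z w : Fin (n + 1) → ℂ) :
    herm n (conjVec n z) (conjVec n w) = herm n w z := by
  simp [herm, conjVec, mul_comm]

theorem fdet_eq_zero_iff {n : ℕ} {z : Fin (n + 1) → ℂ} (hz : 0 ≤ (herm n z z).re) :
    fdet n z = 0 ↔ ‖herm n z (conjVec n z)‖ = (herm n z z).re := by
  rw [fdet, sub_eq_zero, Complex.normSq_eq_norm_sq, sq_eq_sq₀ (norm_nonneg _) hz]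

/-- (Lemma 3.17): If `z` is a positive vector with `z, z̄` linearly independent and
`f(z) = 0` (the plane `span{z,z̄}` is parabolic), and `η² = −⟨z,z̄⟩`, then
`|η|² = ⟨z,z⟩` and `w = conj(η)·z + η·z̄` is orthogonal to both `z` and `z̄`. -/
theorem midpoint_in_orth (n : ℕ) (hn : 1 ≤ n) (z : Fin (n + 1) → ℂ)
    (hpos : 0 < (herm n z z).re)
    (hind : LinearIndependent ℂ ![z, conjVec n z])
    (hf : fdet n z = 0) (η : ℂ) (hη : η ^ 2 = -herm n z (conjVec n z)) :
    Complex.normSq η = (herm n z z).re ∧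
    herm n z (conj η • z + η • conjVec n z) = 0 ∧
    herm n (conjVec n z) (conj η • z + η • conjVec n z) = 0 := by
  rw [Complex.normSq_eq_norm_sq]
  exact midpoint_in_orth_general (isSymm_hermForm n) (herm_conjVec_conjVec n z z)
    ((fdet_eq_zero_iff hpos.le).mp hf) hη
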